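/- arXiv:0812.2605 — 6 statements merged into one kernel-verified Lean document; each statement's English description precedes it below -/
import Mathlib

section
/- For all X, Y, Z, W ∈ V orthogonal to ξ, one has Rᵢ(φX,φY,φZ,φW) = Rᵢ(X,Y,Z,W) for i = 1, 2, 3, 6 (where Rᵢ(X,Y,Z,W) = ⟨Rᵢ(X,Y)Z,W⟩). Consequently, R(φX,φY,φZ,φW) − f₄R₄(φX,φY,φZ,φW) − f₅R₅(φX,φY,φZ,φW) = R(X,Y,Z,W) − f₄R₄(X,Y,Z,W) − f₅R₅(X,Y,Z,W). -/
open RealInnerProductSpace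

variable {V : Type*} [NormedAddCommGroup V] [InnerProductSpace ℝ V]

/-- R₁(X,Y)Z = ⟨Y,Z⟩X − ⟨X,Z⟩Y -/
noncomputable def R1 (X Y Z : V) : V := ⟪Y, Z⟫ • X - ⟪X, Z⟫ • Y

/-- R₂(X,Y)Z = ⟨X,φZ⟩φY − ⟨Y,φZ⟩φX + 2⟨X,φY⟩φZ -/
noncomputable def R2 (φ : V →ₗ[ℝ] V) (X Y Z : V) : V :=
  ⟪X, φ Z⟫ • φ Y - ⟪Y, φ Z⟫ • φ X + (2 * ⟪X, φ Y⟫) • φ Z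

/-- R₃(X,Y)Z = η(X)η(Z)Y − η(Y)η(Z)X + ⟨X,Z⟩η(Y)ξ − ⟨Y,Z⟩η(X)ξ, where η(X) = ⟨X,ξ⟩ -/
noncomputable def R3 (ξ : V) (X Y Z : V) : V :=
  (⟪X, ξ⟫ * ⟪Z, ξ⟫) • Y - (⟪Y, ξ⟫ * ⟪Z, ξ⟫) • X
    + (⟪X, Z⟫ * ⟪Y, ξ⟫) • ξ - (⟪Y, Z⟫ * ⟪X, ξ⟫) • ξ

/-- R₄(X,Y)Z = ⟨Y,Z⟩hX − ⟨X,Z⟩hY + ⟨hY,Z⟩X − ⟨hX,Z⟩Y -/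
noncomputable def R4 (h : V →ₗ[ℝ] V) (X Y Z : V) : V :=
  ⟪Y, Z⟫ • h X - ⟪X, Z⟫ • h Y + ⟪h Y, Z⟫ • X - ⟪h X, Z⟫ • Y

/-- R₅(X,Y)Z = ⟨hY,Z⟩hX − ⟨hX,Z⟩hY + ⟨φhX,Z⟩φhY − ⟨φhY,Z⟩φhX -/
noncomputable def R5 (φ h : V →ₗ[ℝ] V) (X Y Z : V) : V :=
  ⟪h Y, Z⟫ • h X - ⟪h X, Z⟫ • h Y
    + ⟪φ (h X), Z⟫ • φ (h Y) - ⟪φ (h Y), Z⟫ • φ (h X)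

/-- R₆(X,Y)Z = η(X)η(Z)hY − η(Y)η(Z)hX + ⟨hX,Z⟩η(Y)ξ − ⟨hY,Z⟩η(X)ξ -/
noncomputable def R6 (ξ : V) (h : V →ₗ[ℝ] V) (X Y Z : V) : V :=
  (⟪X, ξ⟫ * ⟪Z, ξ⟫) • h Y - (⟪Y, ξ⟫ * ⟪Z, ξ⟫) • h X
    + (⟪h X, Z⟫ * ⟪Y, ξ⟫) • ξ - (⟪h Y, Z⟫ * ⟪X, ξ⟫) • ξ

/-- R = f₁R₁ + f₂R₂ + f₃R₃ + f₄R₄ + f₅R₅ + f₆R₆ -/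
noncomputable def Rc (φ h : V →ₗ[ℝ] V) (ξ : V) (f₁ f₂ f₃ f₄ f₅ f₆ : ℝ) (X Y Z : V) : V :=
  f₁ • R1 X Y Z + f₂ • R2 φ X Y Z + f₃ • R3 ξ X Y Z + f₄ • R4 h X Y Z
    + f₅ • R5 φ h X Y Z + f₆ • R6 ξ h X Y Z

/-- R(X,Y,Z,W) = ⟨R(X,Y)Z, W⟩ -/
noncomputable def Rq (φ h : V →ₗ[ℝ] V) (ξ : V) (f₁ f₂ f₃ f₄ f₅ f₆ : ℝ) (X Y Z W : V) : ℝ :=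
  ⟪Rc φ h ξ f₁ f₂ f₃ f₄ f₅ f₆ X Y Z, W⟫

/-!
On the hyperplane `E = ξᗮ` the tensors `R₃` and `R₆` vanish, since each of their terms carries a
factor `η(X)` or `η(Y)`. The tensors `R₁` and `R₂` are built from the inner product and `φ` alone,
hence are equivariant under every linear map that acts isometrically on `E` and commutes with `φ`.
An almost contact structure `φ` preserves `E` and is itself such a map.
-/

section Equivariance

variable {E : Submodule ℝ V} {T : V →ₗ[ℝ] V} {X Y Z : V}

lemma R1_mem (hX : X ∈ E) (hY : Y ∈ E) : R1 X Y Z ∈ E :=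
  E.sub_mem (E.smul_mem _ hX) (E.smul_mem _ hY)

lemma R2_mem {φ : V →ₗ[ℝ] V} (hφ : ∀ U ∈ E, φ U ∈ E) (hX : X ∈ E) (hY : Y ∈ E) (hZ : Z ∈ E) :
    R2 φ X Y Z ∈ E :=
  E.add_mem (E.sub_mem (E.smul_mem _ (hφ Y hY)) (E.smul_mem _ (hφ X hX)))
    (E.smul_mem _ (hφ Z hZ))

lemma R1_map (hT : ∀ U ∈ E, ∀ U' ∈ E, ⟪T U, T U'⟫ = ⟪U, U'⟫)
    (hX : X ∈ E) (hY : Y ∈ E) (hZ : Z ∈ E) :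
    R1 (T X) (T Y) (T Z) = T (R1 X Y Z) := by
  simp only [R1, map_sub, map_smul, hT X hX Z hZ, hT Y hY Z hZ]

lemma R2_map {φ : V →ₗ[ℝ] V} (hT : ∀ U ∈ E, ∀ U' ∈ E, ⟪T U, T U'⟫ = ⟪U, U'⟫)
    (hφ : ∀ U ∈ E, φ U ∈ E) (hcomm : ∀ U ∈ E, φ (T U) = T (φ U))
    (hX : X ∈ E) (hY : Y ∈ E) (hZ : Z ∈ E) :
    R2 φ (T X) (T Y) (T Z) = T (R2 φ X Y Z) := by
  simp only [R2, map_add, map_sub, map_smul, hcomm X hX, hcomm Y hY, hcomm Z hZ,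
    hT X hX (φ Z) (hφ Z hZ), hT Y hY (φ Z) (hφ Z hZ), hT X hX (φ Y) (hφ Y hY)]

end Equivariance

section Horizontal

variable {ξ X Y : V}

lemma R3_eq_zero (hX : ⟪X, ξ⟫ = 0) (hY : ⟪Y, ξ⟫ = 0) (Z : V) : R3 ξ X Y Z = 0 := by
  simp [R3, hX, hY]

lemma R6_eq_zero (h : V →ₗ[ℝ] V) (hX : ⟪X, ξ⟫ = 0) (hY : ⟪Y, ξ⟫ = 0) (Z : V) :
    R6 ξ h X Y Z = 0 := by
  simp [R6, hX, hY]

end Horizontal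

lemma Rq_sub_R4_sub_R5 (φ h : V →ₗ[ℝ] V) (ξ : V) (f₁ f₂ f₃ f₄ f₅ f₆ : ℝ) (X Y Z W : V) :
    Rq φ h ξ f₁ f₂ f₃ f₄ f₅ f₆ X Y Z W - f₄ * ⟪R4 h X Y Z, W⟫ - f₅ * ⟪R5 φ h X Y Z, W⟫ =
      f₁ * ⟪R1 X Y Z, W⟫ + f₂ * ⟪R2 φ X Y Z, W⟫ + f₃ * ⟪R3 ξ X Y Z, W⟫
        + f₆ * ⟪R6 ξ h X Y Z, W⟫ := by
  simp only [Rq, Rc, inner_add_left, real_inner_smul_left]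
  ring

section AlmostContact

variable {φ : V →ₗ[ℝ] V} {ξ : V}

lemma map_reeb_eq_zero (hξ : ‖ξ‖ = 1)
    (hmet : ∀ X Y : V, ⟪φ X, φ Y⟫ = ⟪X, Y⟫ - ⟪X, ξ⟫ * ⟪Y, ξ⟫) : φ ξ = 0 := by
  have hξξ : ⟪ξ, ξ⟫ = 1 := inner_self_eq_one_of_norm_eq_one hξ
  have hnorm : ⟪φ ξ, φ ξ⟫ = 0 := by rw [hmet, hξξ, mul_one, sub_self]
  exact inner_self_eq_zero.mp hnorm

lemma inner_map_reeb_eq_zero (hξ : ξ ≠ 0) (hφξ : φ ξ = 0)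
    (hφ2 : ∀ X : V, φ (φ X) = -X + ⟪X, ξ⟫ • ξ) (X : V) : ⟪φ X, ξ⟫ = 0 := by
  -- Evaluate `φ³ X` both as `φ² (φ X)` and as `φ (φ² X)`.
  have hcube : -φ X + ⟪φ X, ξ⟫ • ξ = -φ X := by
    rw [← hφ2 (φ X), hφ2 X, map_add, map_neg, map_smul, hφξ, smul_zero, add_zero]
  exact (smul_eq_zero.mp (add_eq_left.mp hcube)).resolve_right hξ

end AlmostContact

theorem stmt5_general (φ h : V →ₗ[ℝ] V) (ξ : V) (f₁ f₂ f₃ f₄ f₅ f₆ : ℝ)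
    (hφ : ∀ X : V, ⟪X, ξ⟫ = 0 → ⟪φ X, ξ⟫ = 0)
    (hmet : ∀ X Y : V, ⟪X, ξ⟫ = 0 → ⟪Y, ξ⟫ = 0 → ⟪φ X, φ Y⟫ = ⟪X, Y⟫) :
    ∀ X Y Z W : V, ⟪X, ξ⟫ = 0 → ⟪Y, ξ⟫ = 0 → ⟪Z, ξ⟫ = 0 → ⟪W, ξ⟫ = 0 →
      ⟪R1 (φ X) (φ Y) (φ Z), φ W⟫ = ⟪R1 X Y Z, W⟫ ∧
      ⟪R2 φ (φ X) (φ Y) (φ Z), φ W⟫ = ⟪R2 φ X Y Z, W⟫ ∧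
      ⟪R3 ξ (φ X) (φ Y) (φ Z), φ W⟫ = ⟪R3 ξ X Y Z, W⟫ ∧
      ⟪R6 ξ h (φ X) (φ Y) (φ Z), φ W⟫ = ⟪R6 ξ h X Y Z, W⟫ ∧
      Rq φ h ξ f₁ f₂ f₃ f₄ f₅ f₆ (φ X) (φ Y) (φ Z) (φ W)
          - f₄ * ⟪R4 h (φ X) (φ Y) (φ Z), φ W⟫
          - f₅ * ⟪R5 φ h (φ X) (φ Y) (φ Z), φ W⟫ =
        Rq φ h ξ f₁ f₂ f₃ f₄ f₅ f₆ X Y Z W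
          - f₄ * ⟪R4 h X Y Z, W⟫ - f₅ * ⟪R5 φ h X Y Z, W⟫ := by
  intro X Y Z W hX hY hZ hW
  let E : Submodule ℝ V := (ℝ ∙ ξ)ᗮ
  have mem_E {U : V} : U ∈ E ↔ ⟪U, ξ⟫ = 0 := Submodule.mem_orthogonal_singleton_iff_inner_left
  have hφE : ∀ U ∈ E, φ U ∈ E := fun U hU => mem_E.mpr (hφ U (mem_E.mp hU))
  have hmetE : ∀ U ∈ E, ∀ U' ∈ E, ⟪φ U, φ U'⟫ = ⟪U, U'⟫ :=
    fun U hU U' hU' => hmet U U' (mem_E.mp hU) (mem_E.mp hU')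
  have hXE : X ∈ E := mem_E.mpr hX
  have hYE : Y ∈ E := mem_E.mpr hY
  have hZE : Z ∈ E := mem_E.mpr hZ
  have hWE : W ∈ E := mem_E.mpr hW
  have h₁ : ⟪R1 (φ X) (φ Y) (φ Z), φ W⟫ = ⟪R1 X Y Z, W⟫ := by
    rw [R1_map hmetE hXE hYE hZE, hmetE _ (R1_mem hXE hYE) W hWE]
  have h₂ : ⟪R2 φ (φ X) (φ Y) (φ Z), φ W⟫ = ⟪R2 φ X Y Z, W⟫ := by
    rw [R2_map hmetE hφE (fun _ _ => rfl) hXE hYE hZE, hmetE _ (R2_mem hφE hXE hYE hZE) W hWE]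
  have h₃ : ⟪R3 ξ (φ X) (φ Y) (φ Z), φ W⟫ = ⟪R3 ξ X Y Z, W⟫ := by
    rw [R3_eq_zero (hφ X hX) (hφ Y hY), R3_eq_zero hX hY, inner_zero_left, inner_zero_left]
  have h₆ : ⟪R6 ξ h (φ X) (φ Y) (φ Z), φ W⟫ = ⟪R6 ξ h X Y Z, W⟫ := by
    rw [R6_eq_zero h (hφ X hX) (hφ Y hY), R6_eq_zero h hX hY, inner_zero_left, inner_zero_left]
  refine ⟨h₁, h₂, h₃, h₆, ?_⟩
  rw [Rq_sub_R4_sub_R5, Rq_sub_R4_sub_R5, h₁, h₂, h₃, h₆]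

theorem stmt5 {V : Type*} [NormedAddCommGroup V] [InnerProductSpace ℝ V]
    (φ h : V →ₗ[ℝ] V) (ξ : V) (f₁ f₂ f₃ f₄ f₅ f₆ : ℝ)
    (hξ : ‖ξ‖ = 1)
    (hφ2 : ∀ X : V, φ (φ X) = -X + ⟪X, ξ⟫ • ξ)
    (hmet : ∀ X Y : V, ⟪φ X, φ Y⟫ = ⟪X, Y⟫ - ⟪X, ξ⟫ * ⟪Y, ξ⟫)
    (hsym : ∀ X Y : V, ⟪h X, Y⟫ = ⟪X, h Y⟫)
    (hhξ : h ξ = 0) :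
    ∀ X Y Z W : V, ⟪X, ξ⟫ = 0 → ⟪Y, ξ⟫ = 0 → ⟪Z, ξ⟫ = 0 → ⟪W, ξ⟫ = 0 →
      ⟪R1 (φ X) (φ Y) (φ Z), φ W⟫ = ⟪R1 X Y Z, W⟫ ∧
      ⟪R2 φ (φ X) (φ Y) (φ Z), φ W⟫ = ⟪R2 φ X Y Z, W⟫ ∧
      ⟪R3 ξ (φ X) (φ Y) (φ Z), φ W⟫ = ⟪R3 ξ X Y Z, W⟫ ∧
      ⟪R6 ξ h (φ X) (φ Y) (φ Z), φ W⟫ = ⟪R6 ξ h X Y Z, W⟫ ∧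
      Rq φ h ξ f₁ f₂ f₃ f₄ f₅ f₆ (φ X) (φ Y) (φ Z) (φ W)
          - f₄ * ⟪R4 h (φ X) (φ Y) (φ Z), φ W⟫
          - f₅ * ⟪R5 φ h (φ X) (φ Y) (φ Z), φ W⟫ =
        Rq φ h ξ f₁ f₂ f₃ f₄ f₅ f₆ X Y Z W
          - f₄ * ⟪R4 h X Y Z, W⟫ - f₅ * ⟪R5 φ h X Y Z, W⟫ := by
  have hξ0 : ξ ≠ 0 := norm_ne_zero_iff.mp (hξ ▸ one_ne_zero)
  exact stmt5_general φ h ξ f₁ f₂ f₃ f₄ f₅ f₆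
    (fun X _ => inner_map_reeb_eq_zero hξ0 (map_reeb_eq_zero hξ hmet) hφ2 X)
    (fun X Y hX _ => by rw [hmet, hX, zero_mul, sub_zero])
end

section
/- For all X, Y, Z, W ∈ V orthogonal to ξ one has R(X,Y,Z,φW) + R(X,Y,φZ,W) = −(f₁−f₂)·P(X,Y,Z,W) − f₄·(P(hX,Y,Z,W) + P(X,hY,Z,W)) − 2f₅·P(hX,hY,Z,W). -/
open RealInnerProductSpace

variable {V : Type*} [NormedAddCommGroup V] [InnerProductSpace ℝ V]

/-- P(X,Y,Z,W) = ⟨X,φZ⟩⟨Y,W⟩ − ⟨X,φW⟩⟨Y,Z⟩ − ⟨Y,φZ⟩⟨X,W⟩ + ⟨Y,φW⟩⟨X,Z⟩ -/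
noncomputable def Pq (φ : V →ₗ[ℝ] V) (X Y Z W : V) : ℝ :=
  ⟪X, φ Z⟫ * ⟪Y, W⟫ - ⟪X, φ W⟫ * ⟪Y, Z⟫
    - ⟪Y, φ Z⟫ * ⟪X, W⟫ + ⟪Y, φ W⟫ * ⟪X, Z⟫

/-! Everything reduces to the skew operators `R1 A B = A ∧ B`: one has
`R4(X,Y) = hX ∧ Y + X ∧ hY`, `R5(X,Y) = hX ∧ hY - φhX ∧ φhY` and, on `ξ^⊥`,
`R2(X,Y) = φX ∧ φY + 2⟨X,φY⟩φ`, while `R3(X,Y)` and `R6(X,Y)` map `ξ^⊥` into `ℝξ`.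
The left-hand side of the identity measures how far `R(X,Y)` is from commuting with `φ`. For
`A ∧ B` this is `-P(A,B,Z,W)`, and for `Z`, `W` orthogonal to `ξ` the form `P` changes sign when `φ`
is applied to both of its first two arguments. -/

section AlmostContact

variable {φ : V →ₗ[ℝ] V} {ξ : V}

theorem inner_phi_eq_zero (hφ2 : ∀ X : V, φ (φ X) = -X + ⟪X, ξ⟫ • ξ) {Z : V}
    (hZ : ⟪Z, ξ⟫ = 0) : ⟪φ Z, ξ⟫ = 0 := by
  have hφφZ : φ (φ Z) = -Z := by rw [hφ2, hZ, zero_smul, add_zero]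
  -- Compute `φ³ Z` as `φ (φ² Z)` and as `φ² (φ Z)`.
  have hsmul : ⟪φ Z, ξ⟫ • ξ = 0 := by simpa [hφφZ] using hφ2 (φ Z)
  rcases smul_eq_zero.mp hsmul with h | h
  · exact h
  · rw [h, inner_zero_right]

theorem inner_phi_left (hφ2 : ∀ X : V, φ (φ X) = -X + ⟪X, ξ⟫ • ξ)
    (hmet : ∀ X Y : V, ⟪φ X, φ Y⟫ = ⟪X, Y⟫ - ⟪X, ξ⟫ * ⟪Y, ξ⟫) (X : V) {Z : V}
    (hZ : ⟪Z, ξ⟫ = 0) : ⟪φ X, Z⟫ = -⟪X, φ Z⟫ := by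
  have h := hmet X (φ Z)
  rw [hφ2, hZ, zero_smul, add_zero, inner_neg_right, inner_phi_eq_zero hφ2 hZ] at h
  linarith

theorem Pq_phi_phi (hφ2 : ∀ X : V, φ (φ X) = -X + ⟪X, ξ⟫ • ξ)
    (hmet : ∀ X Y : V, ⟪φ X, φ Y⟫ = ⟪X, Y⟫ - ⟪X, ξ⟫ * ⟪Y, ξ⟫) (A B : V) {Z W : V}
    (hZ : ⟪Z, ξ⟫ = 0) (hW : ⟪W, ξ⟫ = 0) : Pq φ (φ A) (φ B) Z W = -Pq φ A B Z W := by
  simp only [Pq, hmet, hZ, hW, inner_phi_left hφ2 hmet _ hZ, inner_phi_left hφ2 hmet _ hW]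
  ring

end AlmostContact

section CurvatureOperators

theorem R2_apply_of_inner_eq_zero {φ : V →ₗ[ℝ] V} {ξ : V}
    (hφ2 : ∀ X : V, φ (φ X) = -X + ⟪X, ξ⟫ • ξ)
    (hmet : ∀ X Y : V, ⟪φ X, φ Y⟫ = ⟪X, Y⟫ - ⟪X, ξ⟫ * ⟪Y, ξ⟫) (X Y : V) {Z : V}
    (hZ : ⟪Z, ξ⟫ = 0) : R2 φ X Y Z = (R1 (φ X) (φ Y) + (2 * ⟪X, φ Y⟫) • ⇑φ) Z := by
  simp only [R2, R1, Pi.add_apply, Pi.smul_apply, inner_phi_left hφ2 hmet _ hZ]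
  module

theorem R3_mem_span (X Y : V) {ξ Z : V} (hZ : ⟪Z, ξ⟫ = 0) : R3 ξ X Y Z ∈ ℝ ∙ ξ := by
  rw [Submodule.mem_span_singleton]
  refine ⟨⟪X, Z⟫ * ⟪Y, ξ⟫ - ⟪Y, Z⟫ * ⟪X, ξ⟫, ?_⟩
  rw [R3, hZ]
  module

theorem R4_eq_R1_add_R1 (h : V →ₗ[ℝ] V) (X Y : V) :
    R4 h X Y = R1 (h X) Y + R1 X (h Y) := by
  funext Z
  simp only [R4, R1, Pi.add_apply]
  module

theorem R5_eq_R1_sub_R1 (φ h : V →ₗ[ℝ] V) (X Y : V) :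
    R5 φ h X Y = R1 (h X) (h Y) - R1 (φ (h X)) (φ (h Y)) := by
  funext Z
  simp only [R5, R1, Pi.sub_apply]
  module

theorem R6_mem_span (h : V →ₗ[ℝ] V) (X Y : V) {ξ Z : V} (hZ : ⟪Z, ξ⟫ = 0) :
    R6 ξ h X Y Z ∈ ℝ ∙ ξ := by
  rw [Submodule.mem_span_singleton]
  refine ⟨⟪h X, Z⟫ * ⟪Y, ξ⟫ - ⟪h Y, Z⟫ * ⟪X, ξ⟫, ?_⟩
  rw [R6, hZ]
  module

theorem Rc_eq_sum (φ h : V →ₗ[ℝ] V) (ξ : V) (f₁ f₂ f₃ f₄ f₅ f₆ : ℝ) (X Y : V) :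
    Rc φ h ξ f₁ f₂ f₃ f₄ f₅ f₆ X Y =
      f₁ • R1 X Y + f₂ • R2 φ X Y + f₃ • R3 ξ X Y + f₄ • R4 h X Y
        + f₅ • R5 φ h X Y + f₆ • R6 ξ h X Y :=
  rfl

end CurvatureOperators

/-- The form measuring how far an operator `T` is from commuting with `φ`: for skew `φ`
it equals `⟪T (φ Z) - φ (T Z), W⟫`. It is stated for a bare function `T`, so that it applies
directly to the partially applied tensors `R1 X Y`, …, `Rc … X Y`. -/
noncomputable def phiDefect (φ : V →ₗ[ℝ] V) (T : V → V) (Z W : V) : ℝ :=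
  ⟪T Z, φ W⟫ + ⟪T (φ Z), W⟫

section PhiDefect

variable (φ : V →ₗ[ℝ] V)

theorem phiDefect_add (S T : V → V) (Z W : V) :
    phiDefect φ (S + T) Z W = phiDefect φ S Z W + phiDefect φ T Z W := by
  simp only [phiDefect, Pi.add_apply, inner_add_left]
  ring

theorem phiDefect_sub (S T : V → V) (Z W : V) :
    phiDefect φ (S - T) Z W = phiDefect φ S Z W - phiDefect φ T Z W := by
  simp only [phiDefect, Pi.sub_apply, inner_sub_left]
  ring

theorem phiDefect_smul (c : ℝ) (T : V → V) (Z W : V) :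
    phiDefect φ (c • T) Z W = c * phiDefect φ T Z W := by
  simp only [phiDefect, Pi.smul_apply, real_inner_smul_left]
  ring

theorem phiDefect_R1 (A B Z W : V) : phiDefect φ (R1 A B) Z W = -Pq φ A B Z W := by
  simp only [phiDefect, R1, Pq, inner_sub_left, real_inner_smul_left]
  ring

theorem phiDefect_R4 (h : V →ₗ[ℝ] V) (X Y Z W : V) :
    phiDefect φ (R4 h X Y) Z W = -(Pq φ (h X) Y Z W + Pq φ X (h Y) Z W) := by
  rw [R4_eq_R1_add_R1, phiDefect_add, phiDefect_R1, phiDefect_R1, neg_add]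

variable {φ} {ξ : V}

theorem phiDefect_self (hφ2 : ∀ X : V, φ (φ X) = -X + ⟪X, ξ⟫ • ξ)
    (hmet : ∀ X Y : V, ⟪φ X, φ Y⟫ = ⟪X, Y⟫ - ⟪X, ξ⟫ * ⟪Y, ξ⟫) (Z : V) {W : V}
    (hW : ⟪W, ξ⟫ = 0) : phiDefect φ φ Z W = 0 := by
  rw [phiDefect, inner_phi_left hφ2 hmet (φ Z) hW, add_neg_cancel]

theorem phiDefect_eq_zero_of_mem_span (hφ2 : ∀ X : V, φ (φ X) = -X + ⟪X, ξ⟫ • ξ) {T : V → V}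
    (hT : ∀ Z : V, ⟪Z, ξ⟫ = 0 → T Z ∈ ℝ ∙ ξ) {Z W : V}
    (hZ : ⟪Z, ξ⟫ = 0) (hW : ⟪W, ξ⟫ = 0) : phiDefect φ T Z W = 0 := by
  have inner_eq_zero {U : V} {A : V} (hA : A ∈ ℝ ∙ ξ) (hU : ⟪U, ξ⟫ = 0) : ⟪A, U⟫ = 0 :=
    Submodule.inner_right_of_mem_orthogonal hA
      (Submodule.mem_orthogonal_singleton_iff_inner_left.mpr hU)
  rw [phiDefect, inner_eq_zero (hT Z hZ) (inner_phi_eq_zero hφ2 hW),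
    inner_eq_zero (hT (φ Z) (inner_phi_eq_zero hφ2 hZ)) hW, add_zero]

theorem phiDefect_R2 (hφ2 : ∀ X : V, φ (φ X) = -X + ⟪X, ξ⟫ • ξ)
    (hmet : ∀ X Y : V, ⟪φ X, φ Y⟫ = ⟪X, Y⟫ - ⟪X, ξ⟫ * ⟪Y, ξ⟫) (X Y : V) {Z W : V}
    (hZ : ⟪Z, ξ⟫ = 0) (hW : ⟪W, ξ⟫ = 0) : phiDefect φ (R2 φ X Y) Z W = Pq φ X Y Z W := by
  calc phiDefect φ (R2 φ X Y) Z W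
      = phiDefect φ (R1 (φ X) (φ Y) + (2 * ⟪X, φ Y⟫) • ⇑φ) Z W := by
        rw [phiDefect, phiDefect, R2_apply_of_inner_eq_zero hφ2 hmet X Y hZ,
          R2_apply_of_inner_eq_zero hφ2 hmet X Y (inner_phi_eq_zero hφ2 hZ)]
    _ = -Pq φ (φ X) (φ Y) Z W := by
        rw [phiDefect_add, phiDefect_smul, phiDefect_R1, phiDefect_self hφ2 hmet Z hW,
          mul_zero, add_zero]
    _ = Pq φ X Y Z W := by rw [Pq_phi_phi hφ2 hmet X Y hZ hW, neg_neg]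

theorem phiDefect_R5 (hφ2 : ∀ X : V, φ (φ X) = -X + ⟪X, ξ⟫ • ξ)
    (hmet : ∀ X Y : V, ⟪φ X, φ Y⟫ = ⟪X, Y⟫ - ⟪X, ξ⟫ * ⟪Y, ξ⟫) (h : V →ₗ[ℝ] V) (X Y : V)
    {Z W : V} (hZ : ⟪Z, ξ⟫ = 0) (hW : ⟪W, ξ⟫ = 0) :
    phiDefect φ (R5 φ h X Y) Z W = -(2 * Pq φ (h X) (h Y) Z W) := by
  rw [R5_eq_R1_sub_R1, phiDefect_sub, phiDefect_R1, phiDefect_R1,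
    Pq_phi_phi hφ2 hmet (h X) (h Y) hZ hW]
  ring

end PhiDefect

theorem stmt7_general {φ : V →ₗ[ℝ] V} (h : V →ₗ[ℝ] V) {ξ : V} (f₁ f₂ f₃ f₄ f₅ f₆ : ℝ)
    (hφ2 : ∀ X : V, φ (φ X) = -X + ⟪X, ξ⟫ • ξ)
    (hmet : ∀ X Y : V, ⟪φ X, φ Y⟫ = ⟪X, Y⟫ - ⟪X, ξ⟫ * ⟪Y, ξ⟫) (X Y : V) {Z W : V}
    (hZ : ⟪Z, ξ⟫ = 0) (hW : ⟪W, ξ⟫ = 0) :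
    Rq φ h ξ f₁ f₂ f₃ f₄ f₅ f₆ X Y Z (φ W) + Rq φ h ξ f₁ f₂ f₃ f₄ f₅ f₆ X Y (φ Z) W =
      -((f₁ - f₂) * Pq φ X Y Z W)
        - f₄ * (Pq φ (h X) Y Z W + Pq φ X (h Y) Z W)
        - 2 * f₅ * Pq φ (h X) (h Y) Z W := by
  have hR3 : phiDefect φ (R3 ξ X Y) Z W = 0 :=
    phiDefect_eq_zero_of_mem_span hφ2 (fun _ => R3_mem_span X Y) hZ hW
  have hR6 : phiDefect φ (R6 ξ h X Y) Z W = 0 :=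
    phiDefect_eq_zero_of_mem_span hφ2 (fun _ => R6_mem_span h X Y) hZ hW
  change phiDefect φ (Rc φ h ξ f₁ f₂ f₃ f₄ f₅ f₆ X Y) Z W = _
  simp only [Rc_eq_sum, phiDefect_add, phiDefect_smul, phiDefect_R1,
    phiDefect_R2 hφ2 hmet X Y hZ hW, hR3, phiDefect_R4, phiDefect_R5 hφ2 hmet h X Y hZ hW, hR6]
  ring

theorem stmt7 {V : Type*} [NormedAddCommGroup V] [InnerProductSpace ℝ V]
    (φ h : V →ₗ[ℝ] V) (ξ : V) (f₁ f₂ f₃ f₄ f₅ f₆ : ℝ)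
    (hξ : ‖ξ‖ = 1)
    (hφ2 : ∀ X : V, φ (φ X) = -X + ⟪X, ξ⟫ • ξ)
    (hmet : ∀ X Y : V, ⟪φ X, φ Y⟫ = ⟪X, Y⟫ - ⟪X, ξ⟫ * ⟪Y, ξ⟫)
    (hsym : ∀ X Y : V, ⟪h X, Y⟫ = ⟪X, h Y⟫)
    (hhξ : h ξ = 0) :
    ∀ X Y Z W : V, ⟪X, ξ⟫ = 0 → ⟪Y, ξ⟫ = 0 → ⟪Z, ξ⟫ = 0 → ⟪W, ξ⟫ = 0 →
      Rq φ h ξ f₁ f₂ f₃ f₄ f₅ f₆ X Y Z (φ W) + Rq φ h ξ f₁ f₂ f₃ f₄ f₅ f₆ X Y (φ Z) W =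
        -((f₁ - f₂) * Pq φ X Y Z W)
          - f₄ * (Pq φ (h X) Y Z W + Pq φ X (h Y) Z W)
          - 2 * f₅ * Pq φ (h X) (h Y) Z W :=
  fun X Y _ _ _ _ hZ hW => stmt7_general h f₁ f₂ f₃ f₄ f₅ f₆ hφ2 hmet X Y hZ hW
end

section
/- Suppose dim V ≥ 3, h = 0, and R(X,Y)ξ = η(Y)X − η(X)Y for all X, Y ∈ V (the curvature identity satisfied by K-contact manifolds). Then f₃ = f₁ − 1. (This is the algebraic content of the theorem that a K-contact generalized (κ,μ)-space form satisfies f₃ = f₁ − 1.) -/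
open RealInnerProductSpace

variable {V : Type*} [NormedAddCommGroup V] [InnerProductSpace ℝ V]

/-!
For an almost contact metric structure and an `h` with `η ∘ h = 0`, the curvature tensor satisfies
`R(X,Y)ξ = (f₁ - f₃) (η(Y)X - η(X)Y) + (f₄ - f₆) (η(Y)hX - η(X)hY)`. If `h` anticommutes with `φ`,
as on every contact metric manifold, its quadratic form takes opposite values at `X` and `φX` for
`X ⟂ ξ`. Pairing `R(X,ξ)ξ = X` with `X`, and the same identity at `φX` with `φX`, then adding,
eliminates `h` and leaves `f₁ - f₃ = 1`.
-/

/-- An almost contact metric structure on a real inner product space. It is encoded by `φ` and `ξ`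
alone, the 1-form `η` being `⟪·, ξ⟫`. -/
structure IsAlmostContactMetric (φ : V →ₗ[ℝ] V) (ξ : V) : Prop where
  norm_xi : ‖ξ‖ = 1
  phi_phi (X : V) : φ (φ X) = -X + ⟪X, ξ⟫ • ξ
  inner_phi_phi (X Y : V) : ⟪φ X, φ Y⟫ = ⟪X, Y⟫ - ⟪X, ξ⟫ * ⟪Y, ξ⟫

namespace IsAlmostContactMetric

variable {φ h : V →ₗ[ℝ] V} {ξ : V}

theorem phi_xi (hφ : IsAlmostContactMetric φ ξ) : φ ξ = 0 := by
  rw [← inner_self_eq_zero (𝕜 := ℝ), hφ.inner_phi_phi, inner_self_eq_one_of_norm_eq_one hφ.norm_xi,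
    mul_one, sub_self]

theorem inner_phi_xi (hφ : IsAlmostContactMetric φ ξ) (X : V) : ⟪φ X, ξ⟫ = 0 := by
  have h_cube : φ (φ (φ X)) = -φ X := by
    rw [hφ.phi_phi X, map_add, map_neg, map_smul, hφ.phi_xi, smul_zero, add_zero]
  have h_smul : ⟪φ X, ξ⟫ • ξ = 0 := by
    rwa [hφ.phi_phi, add_eq_left] at h_cube
  have hξ0 : ξ ≠ 0 := ne_zero_of_norm_ne_zero (by simp [hφ.norm_xi])
  exact (smul_eq_zero.mp h_smul).resolve_right hξ0

theorem inner_map_xi_of_anticomm (hφ : IsAlmostContactMetric φ ξ) (hhξ : h ξ = 0)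
    (hanti : ∀ X, h (φ X) = -φ (h X)) (X : V) : ⟪h X, ξ⟫ = 0 := by
  have h_eq : h X = φ (h (φ X)) := by
    have h_neg := hanti (φ X)
    rw [hφ.phi_phi, map_add, map_neg, map_smul, hhξ, smul_zero, add_zero] at h_neg
    exact neg_injective h_neg
  rw [h_eq, hφ.inner_phi_xi]

theorem inner_map_phi_phi_of_anticomm (hφ : IsAlmostContactMetric φ ξ)
    (hanti : ∀ X, h (φ X) = -φ (h X)) {X : V} (hX : ⟪X, ξ⟫ = 0) :
    ⟪h (φ X), φ X⟫ = -⟪h X, X⟫ := by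
  rw [hanti, inner_neg_left, hφ.inner_phi_phi, hX, mul_zero, sub_zero]

end IsAlmostContactMetric

section CurvatureAlongXi

variable {φ h : V →ₗ[ℝ] V} {ξ : V}

theorem R2_xi (hφξ : φ ξ = 0) (X Y : V) : R2 φ X Y ξ = 0 := by
  simp [R2, hφξ]

theorem R3_xi (hξ : ‖ξ‖ = 1) (X Y : V) : R3 ξ X Y ξ = -(⟪Y, ξ⟫ • X - ⟪X, ξ⟫ • Y) := by
  simp only [R3, inner_self_eq_one_of_norm_eq_one hξ]
  module

theorem R4_xi (hη : ∀ X, ⟪h X, ξ⟫ = 0) (X Y : V) :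
    R4 h X Y ξ = ⟪Y, ξ⟫ • h X - ⟪X, ξ⟫ • h Y := by
  simp [R4, hη]

theorem R5_xi (hηφ : ∀ X, ⟪φ X, ξ⟫ = 0) (hη : ∀ X, ⟪h X, ξ⟫ = 0) (X Y : V) :
    R5 φ h X Y ξ = 0 := by
  simp [R5, hηφ, hη]

theorem R6_xi (hξ : ‖ξ‖ = 1) (hη : ∀ X, ⟪h X, ξ⟫ = 0) (X Y : V) :
    R6 ξ h X Y ξ = -(⟪Y, ξ⟫ • h X - ⟪X, ξ⟫ • h Y) := by
  simp [R6, hξ, hη]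

theorem Rc_xi (hφ : IsAlmostContactMetric φ ξ) (hη : ∀ X, ⟪h X, ξ⟫ = 0)
    (f₁ f₂ f₃ f₄ f₅ f₆ : ℝ) (X Y : V) :
    Rc φ h ξ f₁ f₂ f₃ f₄ f₅ f₆ X Y ξ =
      (f₁ - f₃) • (⟪Y, ξ⟫ • X - ⟪X, ξ⟫ • Y) + (f₄ - f₆) • (⟪Y, ξ⟫ • h X - ⟪X, ξ⟫ • h Y) := by
  rw [Rc, R1, R2_xi hφ.phi_xi, R3_xi hφ.norm_xi, R4_xi hη, R5_xi hφ.inner_phi_xi hη,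
    R6_xi hφ.norm_xi hη]
  module

theorem Rc_xi_xi_of_inner_eq_zero (hφ : IsAlmostContactMetric φ ξ) (hη : ∀ X, ⟪h X, ξ⟫ = 0)
    (f₁ f₂ f₃ f₄ f₅ f₆ : ℝ) {X : V} (hX : ⟪X, ξ⟫ = 0) :
    Rc φ h ξ f₁ f₂ f₃ f₄ f₅ f₆ X ξ ξ = (f₁ - f₃) • X + (f₄ - f₆) • h X := by
  simp [Rc_xi hφ hη, hX, hφ.norm_xi]

end CurvatureAlongXi

theorem exists_ne_zero_inner_eq_zero (hV : 1 < Module.rank ℝ V) (ξ : V) :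
    ∃ X : V, X ≠ 0 ∧ ⟪X, ξ⟫ = 0 := by
  have h_span : (ℝ ∙ ξ) ≠ ⊤ := by
    intro h_top
    have h_rank := rank_span_le (R := ℝ) {ξ}
    rw [h_top, rank_top, Cardinal.mk_singleton] at h_rank
    exact hV.not_ge h_rank
  have h_orth : (ℝ ∙ ξ)ᗮ ≠ ⊥ := mt Submodule.orthogonal_eq_bot_iff.mp h_span
  obtain ⟨X, hX, hX0⟩ := Submodule.exists_mem_ne_zero_of_ne_bot h_orth
  exact ⟨X, hX0, Submodule.mem_orthogonal_singleton_iff_inner_left.mp hX⟩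

theorem stmt10_general {φ h : V →ₗ[ℝ] V} {ξ : V} (f₁ f₂ f₃ f₄ f₅ f₆ : ℝ)
    (hφ : IsAlmostContactMetric φ ξ) (hhξ : h ξ = 0) (hanti : ∀ X, h (φ X) = -φ (h X))
    (hV : 1 < Module.rank ℝ V)
    (hK : ∀ X, ⟪X, ξ⟫ = 0 → Rc φ h ξ f₁ f₂ f₃ f₄ f₅ f₆ X ξ ξ = X) :
    f₃ = f₁ - 1 := by
  obtain ⟨X, hX0, hX⟩ := exists_ne_zero_inner_eq_zero hV ξ
  have h_quad (Y : V) (hY : ⟪Y, ξ⟫ = 0) :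
      (f₁ - f₃) * ⟪Y, Y⟫ + (f₄ - f₆) * ⟪h Y, Y⟫ = ⟪Y, Y⟫ := by
    have h_eq : (f₁ - f₃) • Y + (f₄ - f₆) • h Y = Y := by
      rw [← Rc_xi_xi_of_inner_eq_zero hφ (hφ.inner_map_xi_of_anticomm hhξ hanti) _ f₂ _ _ f₅ _ hY,
        hK Y hY]
    rw [← real_inner_smul_left, ← real_inner_smul_left, ← inner_add_left, h_eq]
  have h_norm : ⟪φ X, φ X⟫ = ⟪X, X⟫ := by rw [hφ.inner_phi_phi, hX, mul_zero, sub_zero]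
  have h_phi := h_quad (φ X) (hφ.inner_phi_xi X)
  rw [h_norm, hφ.inner_map_phi_phi_of_anticomm hanti hX] at h_phi
  have h_prod : (f₁ - f₃ - 1) * ⟪X, X⟫ = 0 := by linarith [h_quad X hX]
  have h_coeff := (mul_eq_zero.mp h_prod).resolve_right (inner_self_ne_zero.mpr hX0)
  linarith

theorem stmt10 {V : Type*} [NormedAddCommGroup V] [InnerProductSpace ℝ V]
    [FiniteDimensional ℝ V]
    (φ h : V →ₗ[ℝ] V) (ξ : V) (f₁ f₂ f₃ f₄ f₅ f₆ : ℝ)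
    (hξ : ‖ξ‖ = 1)
    (hφ2 : ∀ X : V, φ (φ X) = -X + ⟪X, ξ⟫ • ξ)
    (hmet : ∀ X Y : V, ⟪φ X, φ Y⟫ = ⟪X, Y⟫ - ⟪X, ξ⟫ * ⟪Y, ξ⟫)
    (hsym : ∀ X Y : V, ⟪h X, Y⟫ = ⟪X, h Y⟫)
    (hhξ : h ξ = 0)
    (hdim : 3 ≤ Module.finrank ℝ V)
    (hh0 : h = 0)
    (hK : ∀ X Y : V, Rc φ h ξ f₁ f₂ f₃ f₄ f₅ f₆ X Y ξ = ⟪Y, ξ⟫ • X - ⟪X, ξ⟫ • Y) :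
    f₃ = f₁ - 1 := by
  subst hh0
  exact stmt10_general f₁ f₂ f₃ f₄ f₅ f₆ ⟨hξ, hφ2, hmet⟩ hhξ (by simp)
    (Module.one_lt_rank_of_one_lt_finrank (by lia)) fun X hX => by simp [hK, hX, hξ]
end

section
/- Let f₁, f₂, f₃, f₄, f₅, f₆ be real numbers with f₁ − f₃ < 1, and set λ = √(1 − f₁ + f₃) > 0. Suppose the following six equations hold: (1) f₁ − f₂ − f₃ − f₄ + f₆ + f₅(1 − f₁ + f₃) = 0; (2) f₁ + f₂ − f₃ + f₅(1 − f₁ + f₃) = 0; (3) 2f₂ + f₄ − f₆ = 0; (4) 2f₁ + 3f₂ − f₃ + f₄ − f₆ = 0; (5) f₅(1 − f₁ + f₃) + 2(f₄ − 1)λ + f₁ + f₄ − f₆ − 2 = 0; (6) f₅(1 − f₁ + f₃) + 2(1 − f₄)λ + f₁ + f₄ − f₆ − 2 = 0. Then f₁ = (f₆+1)/2, f₂ = (f₆−1)/2, f₃ = (3f₆+1)/2, f₄ = 1, f₅ = 1/2, and f₆ > −1. Consequently f₁ − f₃ = −f₆, f₄ − f₆ = 1 − f₆, and f₁ + 3f₂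 = 2f₆ − 1. (This is the linear system arising in the classification of non-Sasakian contact metric generalized (κ,μ)-space forms of dimension ≥ 5.) -/
/-!
Equations (5) and (6) differ only in the sign of the term containing `λ`, so `λ ≠ 0` forces
`f₄ = 1`. The other equations are then linear in `f₁`, `f₂`, `f₃` and the product
`f₅ (1 - f₁ + f₃)`; they determine `f₁`, `f₂`, `f₃` in terms of `f₆` and make the product equal to
`f₁ = (f₆ + 1) / 2`. Since `1 - f₁ + f₃ = f₆ + 1` is nonzero, `f₅ = 1 / 2`.
-/

theorem eq_zero_of_add_mul_eq_zero_of_sub_mul_eq_zero {R : Type*} [Ring R] [NoZeroDivisors R]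
    [NeZero (2 : R)] {a b c : R} (hc : c ≠ 0) (hadd : a + b * c = 0) (hsub : a - b * c = 0) :
    b = 0 := by
  have htwice : 2 * (b * c) = 0 :=
    calc
      2 * (b * c) = (a + b * c) - (a - b * c) := by noncomm_ring
      _ = 0 := by rw [hadd, hsub, sub_zero]
  have hmul : b * c = 0 := (mul_eq_zero_iff_left two_ne_zero).mp htwice
  exact (mul_eq_zero_iff_right hc).mp hmul

theorem stmt11_general {K : Type*} [Field K] [NeZero (2 : K)] {f₁ f₂ f₃ f₄ f₅ f₆ r : K}
    (hne : f₁ - f₃ ≠ 1) (hr : r ^ 2 = 1 - f₁ + f₃)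
    (e2 : f₁ + f₂ - f₃ + f₅ * (1 - f₁ + f₃) = 0)
    (e3 : 2 * f₂ + f₄ - f₆ = 0)
    (e4 : 2 * f₁ + 3 * f₂ - f₃ + f₄ - f₆ = 0)
    (e5 : f₅ * (1 - f₁ + f₃) + 2 * (f₄ - 1) * r + f₁ + f₄ - f₆ - 2 = 0)
    (e6 : f₅ * (1 - f₁ + f₃) + 2 * (1 - f₄) * r + f₁ + f₄ - f₆ - 2 = 0) :
    f₁ = (f₆ + 1) / 2 ∧ f₂ = (f₆ - 1) / 2 ∧ f₃ = (3 * f₆ + 1) / 2 ∧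
      f₄ = 1 ∧ f₅ = 1 / 2 ∧ f₆ ≠ -1 ∧
      f₁ - f₃ = -f₆ ∧ f₄ - f₆ = 1 - f₆ ∧ f₁ + 3 * f₂ = 2 * f₆ - 1 := by
  have htwo : (2 : K) ≠ 0 := two_ne_zero
  have hr_ne : r ≠ 0 := by
    rintro rfl
    exact hne (by linear_combination hr)
  have hf₄ : f₄ = 1 := sub_eq_zero.mp <|
    eq_zero_of_add_mul_eq_zero_of_sub_mul_eq_zero
      (a := f₅ * (1 - f₁ + f₃) + f₁ + f₄ - f₆ - 2) (mul_ne_zero htwo hr_ne)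
      (by linear_combination e5) (by linear_combination e6)
  subst hf₄
  have hprod : f₅ * (1 - f₁ + f₃) = f₁ := by linear_combination e2 + e3 - e4
  have hf₁ : 2 * f₁ = f₆ + 1 := by linear_combination e5 - hprod
  have hf₂ : 2 * f₂ = f₆ - 1 := by linear_combination e3
  have hf₃ : f₃ = 2 * f₁ + f₂ := by linear_combination e3 - e4
  have hsum : f₁ + f₂ = f₆ := mul_left_cancel₀ htwo (by linear_combination hf₁ + hf₂)
  have hκ : f₁ - f₃ = -f₆ := by linear_combination -hf₃ - hsum
  have hf₆ : f₆ ≠ -1 := by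
    rintro rfl
    exact hne (by linear_combination hκ)
  have hf₅ : 2 * f₅ = 1 :=
    mul_right_cancel₀ (b := f₆ + 1) (add_eq_zero_iff_eq_neg.not.mpr hf₆)
      (by linear_combination 2 * hprod + hf₁ + 2 * f₅ * hκ)
  refine ⟨?_, ?_, ?_, rfl, ?_, hf₆, hκ, rfl, by linear_combination hsum + hf₂⟩ <;>
    rw [eq_div_iff htwo]
  · linear_combination hf₁
  · linear_combination hf₂
  · linear_combination 2 * hf₃ + 2 * hf₁ + hf₂
  · linear_combination hf₅

theorem stmt11 (f₁ f₂ f₃ f₄ f₅ f₆ : ℝ)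
    (hlt : f₁ - f₃ < 1)
    (e1 : f₁ - f₂ - f₃ - f₄ + f₆ + f₅ * (1 - f₁ + f₃) = 0)
    (e2 : f₁ + f₂ - f₃ + f₅ * (1 - f₁ + f₃) = 0)
    (e3 : 2 * f₂ + f₄ - f₆ = 0)
    (e4 : 2 * f₁ + 3 * f₂ - f₃ + f₄ - f₆ = 0)
    (e5 : f₅ * (1 - f₁ + f₃) + 2 * (f₄ - 1) * Real.sqrt (1 - f₁ + f₃)
            + f₁ + f₄ - f₆ - 2 = 0)
    (e6 : f₅ * (1 - f₁ + f₃) + 2 * (1 - f₄) * Real.sqrt (1 - f₁ + f₃)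
            + f₁ + f₄ - f₆ - 2 = 0) :
    f₁ = (f₆ + 1) / 2 ∧ f₂ = (f₆ - 1) / 2 ∧ f₃ = (3 * f₆ + 1) / 2 ∧
      f₄ = 1 ∧ f₅ = 1 / 2 ∧ f₆ > -1 ∧
      f₁ - f₃ = -f₆ ∧ f₄ - f₆ = 1 - f₆ ∧ f₁ + 3 * f₂ = 2 * f₆ - 1 := by
  obtain ⟨hf₁, hf₂, hf₃, hf₄, hf₅, -, hκ, hμ, hφ⟩ :=
    stmt11_general hlt.ne (Real.sq_sqrt (by linarith)) e2 e3 e4 e5 e6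
  exact ⟨hf₁, hf₂, hf₃, hf₄, hf₅, by linarith, hκ, hμ, hφ⟩
end

section
/- Suppose dim V = 3 and the contact metric algebraic relations h∘φ = −φ∘h and tr(h) = 0 hold. Then the following tensor identities hold on V: R₅ = 0, R₄ + R₆ = 0, and R₂ = 3R₁ + 3R₃ (equivalently, −R₁ + (1/3)R₂ − R₃ = 0). (These are the identities valid for every 3-dimensional contact metric manifold used to show that the expression of the curvature tensor of a 3-dimensional generalized (κ,μ)-space form is not unique.) -/
open RealInnerProductSpace

variable {V : Type*} [NormedAddCommGroup V] [InnerProductSpace ℝ V]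

/-!
In dimension three the horizontal vectors, those orthogonal to `ξ`, form a plane on which `φ` is a
rotation by a right angle. Expanding in the orthogonal frame `W, φ W` of this plane gives
`R1 U W Z = ⟪U, φ W⟫ • φ Z` for horizontal `U` and `W`. The map `φ ∘ φ` is minus the projection
onto the plane, and with its help each of the three identities becomes one about values of `R1` at
horizontal vectors, where it remains to compare the coefficients of `φ Z`.
-/

theorem eq_of_forall_inner_eq_of_card_eq_finrank {𝕜 E ι : Type*} [RCLike 𝕜]
    [NormedAddCommGroup E] [InnerProductSpace 𝕜 E] [Fintype ι] [Nonempty ι] {v : ι → E}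
    (hne : ∀ i, v i ≠ 0) (horth : Pairwise fun i j ↦ inner 𝕜 (v i) (v j) = 0)
    (hcard : Fintype.card ι = Module.finrank 𝕜 E) {x y : E}
    (hxy : ∀ i, inner 𝕜 x (v i) = inner 𝕜 y (v i)) : x = y :=
  InnerProductSpace.ext_inner_right_basis (basisOfLinearIndependentOfCardEqFinrank
    (linearIndependent_of_ne_zero_of_inner_eq_zero hne horth) hcard)
    fun i ↦ by simpa using hxy i

/-- `(φ, ξ)` is an almost contact metric structure on the inner product space `V`. The one-form
`η` is not part of the data: it is `X ↦ ⟪X, ξ⟫`. -/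
structure IsAlmostContactMetric_s12 (φ : V →ₗ[ℝ] V) (ξ : V) : Prop where
  norm_xi : ‖ξ‖ = 1
  map_map : ∀ X, φ (φ X) = -X + ⟪X, ξ⟫ • ξ
  inner_map_map : ∀ X Y, ⟪φ X, φ Y⟫ = ⟪X, Y⟫ - ⟪X, ξ⟫ * ⟪Y, ξ⟫

namespace IsAlmostContactMetric_s12

variable {φ h : V →ₗ[ℝ] V} {ξ : V}

theorem xi_ne_zero (H : IsAlmostContactMetric_s12 φ ξ) : ξ ≠ 0 :=
  norm_ne_zero_iff.mp (by simp [H.norm_xi])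

theorem inner_xi_xi (H : IsAlmostContactMetric_s12 φ ξ) : ⟪ξ, ξ⟫ = 1 :=
  inner_self_eq_one_of_norm_eq_one H.norm_xi

theorem map_xi (H : IsAlmostContactMetric_s12 φ ξ) : φ ξ = 0 := by
  rw [← inner_self_eq_zero (𝕜 := ℝ), H.inner_map_map, H.inner_xi_xi]
  norm_num

theorem map_map_map (H : IsAlmostContactMetric_s12 φ ξ) (X : V) : φ (φ (φ X)) = -φ X := by
  rw [H.map_map X, map_add, map_neg, map_smul, H.map_xi, smul_zero, add_zero]

theorem inner_map_xi (H : IsAlmostContactMetric_s12 φ ξ) (X : V) : ⟪φ X, ξ⟫ = 0 := by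
  have hsmul : ⟪φ X, ξ⟫ • ξ = 0 := by
    simpa only [H.map_map_map, left_eq_add] using H.map_map (φ X)
  exact (smul_eq_zero.mp hsmul).resolve_right H.xi_ne_zero

theorem norm_map_of_inner_xi_eq_zero (H : IsAlmostContactMetric_s12 φ ξ) {X : V}
    (hX : ⟪X, ξ⟫ = 0) : ‖φ X‖ = ‖X‖ := by
  rw [norm_eq_sqrt_real_inner, H.inner_map_map, hX, mul_zero, sub_zero,
    ← norm_eq_sqrt_real_inner]

theorem inner_map_left (H : IsAlmostContactMetric_s12 φ ξ) (X Y : V) :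
    ⟪φ X, Y⟫ = -⟪X, φ Y⟫ := by
  have hpair := H.inner_map_map X (φ Y)
  rw [H.map_map, inner_add_right, inner_neg_right, real_inner_smul_right,
    H.inner_map_xi, H.inner_map_xi] at hpair
  linarith

theorem inner_self_map (H : IsAlmostContactMetric_s12 φ ξ) (X : V) : ⟪X, φ X⟫ = 0 := by
  have hskew := H.inner_map_left X X
  rw [real_inner_comm] at hskew
  linarith

theorem inner_self_smul_eq_of_finrank_eq_three (H : IsAlmostContactMetric_s12 φ ξ)
    (hdim : Module.finrank ℝ V = 3) {U W : V} (hU : ⟪U, ξ⟫ = 0) (hW : ⟪W, ξ⟫ = 0) :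
    ⟪W, W⟫ • U = ⟪U, W⟫ • W + ⟪U, φ W⟫ • φ W := by
  rcases eq_or_ne W 0 with rfl | hW0
  · simp
  have hφW : ‖φ W‖ = ‖W‖ := H.norm_map_of_inner_xi_eq_zero hW
  have hφW0 : φ W ≠ 0 := by rwa [← norm_ne_zero_iff, hφW, norm_ne_zero_iff]
  have hξW : ⟪ξ, W⟫ = 0 := by rw [real_inner_comm, hW]
  have hφWξ : ⟪φ W, ξ⟫ = 0 := H.inner_map_xi W
  have hξφW : ⟪ξ, φ W⟫ = 0 := by rw [real_inner_comm, hφWξ]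
  have hWφW : ⟪W, φ W⟫ = 0 := H.inner_self_map W
  have hφWW : ⟪φ W, W⟫ = 0 := by rw [real_inner_comm, hWφW]
  have hne : ∀ i, ![ξ, W, φ W] i ≠ 0 := by
    simp [Fin.forall_fin_succ, H.xi_ne_zero, hW0, hφW0]
  have horth : Pairwise fun i j ↦ ⟪![ξ, W, φ W] i, ![ξ, W, φ W] j⟫ = 0 := by
    intro i j hij
    fin_cases i <;> fin_cases j <;> simp_all
  refine eq_of_forall_inner_eq_of_card_eq_finrank hne horth (by simp [hdim]) fun i ↦ ?_
  rw [inner_add_left, real_inner_smul_left, real_inner_smul_left, real_inner_smul_left]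
  fin_cases i
  · simp [hU, hW, hφWξ]
  · simp [hφWW, mul_comm]
  · simp [hWφW, hφW, mul_comm]

theorem R1_eq_smul_of_finrank_eq_three (H : IsAlmostContactMetric_s12 φ ξ)
    (hdim : Module.finrank ℝ V = 3) {U W : V} (hU : ⟪U, ξ⟫ = 0) (hW : ⟪W, ξ⟫ = 0) (Z : V) :
    R1 U W Z = ⟪U, φ W⟫ • φ Z := by
  rcases eq_or_ne W 0 with rfl | hW0
  · simp [R1]
  have hU_expand := H.inner_self_smul_eq_of_finrank_eq_three hdim hU hW
  have hφZ_expand : ⟪W, W⟫ • φ Z = ⟪Z, W⟫ • φ W - ⟪Z, φ W⟫ • W := by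
    rw [H.inner_self_smul_eq_of_finrank_eq_three hdim (H.inner_map_xi Z) hW,
      H.inner_map_left, H.inner_map_map, hW]
    module
  have hUZ : ⟪W, W⟫ * ⟪U, Z⟫ = ⟪U, W⟫ * ⟪Z, W⟫ + ⟪U, φ W⟫ * ⟪Z, φ W⟫ := by
    simpa only [inner_add_left, real_inner_smul_left, real_inner_comm Z W,
      real_inner_comm Z (φ W)] using congrArg (⟪·, Z⟫) hU_expand
  apply smul_right_injective V (inner_self_ne_zero (𝕜 := ℝ).mpr hW0)
  calc ⟪W, W⟫ • R1 U W Z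
      = ⟪Z, W⟫ • (⟪W, W⟫ • U) - (⟪W, W⟫ * ⟪U, Z⟫) • W := by
        rw [R1, real_inner_comm Z W]
        module
    _ = ⟪U, φ W⟫ • (⟪Z, W⟫ • φ W - ⟪Z, φ W⟫ • W) := by
        rw [hU_expand, hUZ]
        module
    _ = ⟪W, W⟫ • (⟪U, φ W⟫ • φ Z) := by
        rw [← hφZ_expand, smul_comm]

theorem R1_map_map_eq_smul_of_finrank_eq_three (H : IsAlmostContactMetric_s12 φ ξ)
    (hdim : Module.finrank ℝ V = 3) (X Y Z : V) : R1 (φ X) (φ Y) Z = ⟪X, φ Y⟫ • φ Z := by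
  rw [H.R1_eq_smul_of_finrank_eq_three hdim (H.inner_map_xi X) (H.inner_map_xi Y),
    H.inner_map_map, H.inner_map_xi, mul_zero, sub_zero]

theorem R1_add_R3_eq_R1_map_map (H : IsAlmostContactMetric_s12 φ ξ) (X Y Z : V) :
    R1 X Y Z + R3 ξ X Y Z = R1 (φ (φ X)) (φ (φ Y)) Z := by
  simp only [R1, R3, H.map_map, inner_add_left, inner_neg_left, real_inner_smul_left,
    real_inner_comm Z ξ]
  module

theorem R2_eq_R1_map_map_add (H : IsAlmostContactMetric_s12 φ ξ) (X Y Z : V) :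
    R2 φ X Y Z = R1 (φ X) (φ Y) Z + (2 * ⟪X, φ Y⟫) • φ Z := by
  simp only [R1, R2, H.inner_map_left]
  module

theorem R4_add_R6_eq_neg_R1_add_R1 (H : IsAlmostContactMetric_s12 φ ξ) (X Y Z : V) :
    R4 h X Y Z + R6 ξ h X Y Z = -(R1 (h X) (φ (φ Y)) Z + R1 (φ (φ X)) (h Y) Z) := by
  simp only [R1, R4, R6, H.map_map, inner_add_left, inner_neg_left, real_inner_smul_left,
    real_inner_comm Z ξ]
  module

theorem R2_eq_of_finrank_eq_three (H : IsAlmostContactMetric_s12 φ ξ)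
    (hdim : Module.finrank ℝ V = 3) (X Y Z : V) :
    R2 φ X Y Z = (3 : ℝ) • R1 X Y Z + (3 : ℝ) • R3 ξ X Y Z := by
  have hR13 : R1 X Y Z + R3 ξ X Y Z = ⟪X, φ Y⟫ • φ Z := by
    rw [H.R1_add_R3_eq_R1_map_map, H.R1_map_map_eq_smul_of_finrank_eq_three hdim, H.inner_map_left,
      H.map_map_map, inner_neg_right, neg_neg]
  rw [H.R2_eq_R1_map_map_add, H.R1_map_map_eq_smul_of_finrank_eq_three hdim, ← smul_add, hR13]
  module

theorem R5_eq_zero_of_finrank_eq_three (H : IsAlmostContactMetric_s12 φ ξ)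
    (hdim : Module.finrank ℝ V = 3) (hhor : ∀ X, ⟪h X, ξ⟫ = 0) (X Y Z : V) :
    R5 φ h X Y Z = 0 := by
  calc R5 φ h X Y Z = R1 (h X) (h Y) Z - R1 (φ (h X)) (φ (h Y)) Z := by
        rw [R5, R1, R1]
        abel
    _ = 0 := by
        rw [H.R1_eq_smul_of_finrank_eq_three hdim (hhor X) (hhor Y),
          H.R1_map_map_eq_smul_of_finrank_eq_three hdim, sub_self]

theorem R4_add_R6_eq_zero_of_finrank_eq_three (H : IsAlmostContactMetric_s12 φ ξ)
    (hdim : Module.finrank ℝ V = 3) (hhor : ∀ X, ⟪h X, ξ⟫ = 0) (hsym : h.IsSymmetric)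
    (hanti : ∀ X, h (φ X) = -φ (h X)) (X Y Z : V) : R4 h X Y Z + R6 ξ h X Y Z = 0 := by
  have hX : R1 (h X) (φ (φ Y)) Z = -⟪h X, φ Y⟫ • φ Z := by
    rw [H.R1_eq_smul_of_finrank_eq_three hdim (hhor X) (H.inner_map_xi _),
      H.map_map_map, inner_neg_right]
  have hY : R1 (φ (φ X)) (h Y) Z = ⟪h X, φ Y⟫ • φ Z := by
    rw [H.R1_eq_smul_of_finrank_eq_three hdim (H.inner_map_xi _) (hhor Y),
      H.inner_map_map, hhor, mul_zero, sub_zero, ← hsym, hanti, inner_neg_left,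
      H.inner_map_left, neg_neg]
  rw [H.R4_add_R6_eq_neg_R1_add_R1, hX, hY, neg_smul, neg_add_cancel, neg_zero]

end IsAlmostContactMetric_s12

theorem stmt12 {V : Type*} [NormedAddCommGroup V] [InnerProductSpace ℝ V]
    [FiniteDimensional ℝ V]
    (φ h : V →ₗ[ℝ] V) (ξ : V)
    (hξ : ‖ξ‖ = 1)
    (hφ2 : ∀ X : V, φ (φ X) = -X + ⟪X, ξ⟫ • ξ)
    (hmet : ∀ X Y : V, ⟪φ X, φ Y⟫ = ⟪X, Y⟫ - ⟪X, ξ⟫ * ⟪Y, ξ⟫)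
    (hsym : ∀ X Y : V, ⟪h X, Y⟫ = ⟪X, h Y⟫)
    (hhξ : h ξ = 0)
    (hdim : Module.finrank ℝ V = 3)
    (hanti : ∀ X : V, h (φ X) = -φ (h X))
    (htr : LinearMap.trace ℝ V h = 0) :
    ∀ X Y Z : V,
      R5 φ h X Y Z = 0 ∧
      R4 h X Y Z + R6 ξ h X Y Z = 0 ∧
      R2 φ X Y Z = (3 : ℝ) • R1 X Y Z + (3 : ℝ) • R3 ξ X Y Z := by
  intro X Y Z
  have H : IsAlmostContactMetric_s12 φ ξ := ⟨hξ, hφ2, hmet⟩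
  have hhor : ∀ X, ⟪h X, ξ⟫ = 0 := fun X ↦ by rw [hsym, hhξ, inner_zero_right]
  exact ⟨H.R5_eq_zero_of_finrank_eq_three hdim hhor X Y Z,
    H.R4_add_R6_eq_zero_of_finrank_eq_three hdim hhor hsym hanti X Y Z,
    H.R2_eq_of_finrank_eq_three hdim X Y Z⟩
end

section
/- Let f₆ be a real number with f₆ > −1 and f₆ ≠ 3, and set c_s = (−5 − f₆ + 4√(f₆ + 1))/(3 − f₆). Then c_s satisfies the quadratic equation (3 − f₆)·c_s² + (10 + 2f₆)·c_s + (3 − f₆) = 0, and moreover c_s > −1 and c_s ≠ 1. (This produces, for every constant f₆ > −1, a space of constant sectional curvature c_s whose unit tangent sphere bundle, after a suitable D_a-homothetic deformation, is a (−f₆, 1−f₆)-space with constant φ-sectional curvature 2f₆ − 1.) -/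
/-!
With `s = √(f₆ + 1)` the quadratic is `(2² - s²) c² + 2 (2² + s²) c + (2² - s²)`, which factors as
`((s + 2) c - (s - 2)) ((s + 2) - (s - 2) c)`. Its roots are therefore `(s - 2) / (s + 2)` and the
inverse of this number. The given `c_s` is the first one, which lies strictly between `-1` and `1`
because `s` and `2` are positive.
-/

theorem palindromic_quadratic_eq_mul {R : Type*} [CommRing R] (a s c : R) :
    (a ^ 2 - s ^ 2) * c ^ 2 + 2 * (a ^ 2 + s ^ 2) * c + (a ^ 2 - s ^ 2) =
      ((s + a) * c - (s - a)) * ((s + a) - (s - a) * c) := by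
  ring

section Field

variable {K : Type*} [Field K] {a s : K}

theorem palindromic_quadratic_sub_div_add_eq_zero (h : s + a ≠ 0) :
    (a ^ 2 - s ^ 2) * ((s - a) / (s + a)) ^ 2 + 2 * (a ^ 2 + s ^ 2) * ((s - a) / (s + a)) +
      (a ^ 2 - s ^ 2) = 0 := by
  rw [palindromic_quadratic_eq_mul, mul_div_cancel₀ _ h, sub_self, zero_mul]

theorem neg_sub_sq_div_sq_sub_sq (h : a ≠ s) :
    -(s - a) ^ 2 / (a ^ 2 - s ^ 2) = (s - a) / (s + a) := by
  calc -(s - a) ^ 2 / (a ^ 2 - s ^ 2)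
      = (a - s) * (s - a) / ((a - s) * (s + a)) := by congr 1 <;> ring
    _ = (s - a) / (s + a) := mul_div_mul_left _ _ (sub_ne_zero.mpr h)

variable [LinearOrder K] [IsStrictOrderedRing K]

theorem neg_one_lt_sub_div_add_iff (h : 0 < s + a) : -1 < (s - a) / (s + a) ↔ 0 < s := by
  rw [lt_div_iff₀ h]
  constructor <;> intro _ <;> linarith

theorem sub_div_add_lt_one_iff (h : 0 < s + a) : (s - a) / (s + a) < 1 ↔ 0 < a := by
  rw [div_lt_one h]
  constructor <;> intro _ <;> linarith

end Field

theorem stmt18_general {K : Type*} [Field K] [LinearOrder K] [IsStrictOrderedRing K] {f s : K}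
    (hs : 0 < s) (hsf : s ^ 2 = f + 1) (hf : f ≠ 3) :
    let c : K := (-5 - f + 4 * s) / (3 - f)
    (3 - f) * c ^ 2 + (10 + 2 * f) * c + (3 - f) = 0 ∧ c > -1 ∧ c ≠ 1 := by
  intro c
  have hpos : 0 < s + 2 := by positivity
  have hs2 : 2 ≠ s := by
    rintro rfl
    exact hf (by linear_combination -hsf)
  have hlead : 3 - f = 2 ^ 2 - s ^ 2 := by linear_combination hsf
  have hmid : 10 + 2 * f = 2 * (2 ^ 2 + s ^ 2) := by linear_combination -2 * hsf
  have hnum : -5 - f + 4 * s = -(s - 2) ^ 2 := by linear_combination hsf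
  have hc : c = (s - 2) / (s + 2) := by
    rw [← neg_sub_sq_div_sq_sub_sq hs2, ← hnum, ← hlead]
  rw [hc, hlead, hmid]
  exact ⟨palindromic_quadratic_sub_div_add_eq_zero hpos.ne',
    (neg_one_lt_sub_div_add_iff hpos).mpr hs, ((sub_div_add_lt_one_iff hpos).mpr two_pos).ne⟩

theorem stmt18 (f₆ : ℝ) (h₁ : f₆ > -1) (h₂ : f₆ ≠ 3) :
    let cs : ℝ := (-5 - f₆ + 4 * Real.sqrt (f₆ + 1)) / (3 - f₆)
    (3 - f₆) * cs ^ 2 + (10 + 2 * f₆) * cs + (3 - f₆) = 0 ∧ cs > -1 ∧ cs ≠ 1 := by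
  have hpos : 0 < f₆ + 1 := neg_lt_iff_pos_add.mp h₁
  exact stmt18_general (Real.sqrt_pos.mpr hpos) (Real.sq_sqrt hpos.le) h₂
end
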